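/- arXiv:2512.00270 — 2 statements merged into one kernel-verified Lean document; each statement's English description precedes it below -/
import Mathlib

section
/- Let F : S → G(S) be a Markov chain on a measurable space S, let p : S → {1,…,2d} be a measurable priority function, and let r = (r₁,…,r_{2d}) be a lexicographic progress-measure supermartingale for (F, p), with r_i the block for priority i. Then for each i ∈ {1,…,d}, the truncation (r₁,…,r_{2i−1}) is a lexicographic generalised Streett supermartingale for the Streett pair (S_{≤2i−1}, S_{≤2i−2}), where S_{≤k} = {x ∈ S ∣ p(x) ≤ k}. -/
open MeasureTheory ProbabilityTheory Set
open scoped ENNReal NNReal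

variable {S : Type*} [MeasurableSpace S]

/-- The strict lexicographic supermartingale ordering on `[0,∞]^n`. -/
def lexGT {n : ℕ} (a b : Fin n → ℝ≥0∞) : Prop :=
  ∃ l : Fin n, (∀ i < l, b i ≤ a i) ∧ b l + 1 ≤ a l

/-- The non-strict lexicographic supermartingale ordering on `[0,∞]^n`. -/
def lexGE {n : ℕ} (a b : Fin n → ℝ≥0∞) : Prop :=
  lexGT a b ∨ ∀ i, b i ≤ a i

/-- The nested strict lexicographic ordering `≻⁽²⁾` on blocks. -/
def nlexGT {D : ℕ} {m : Fin D → ℕ} (a b : ∀ i, Fin (m i) → ℝ≥0∞) : Prop :=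
  ∃ l : Fin D, (∀ i < l, lexGE (a i) (b i)) ∧ lexGT (a l) (b l)

/-- The nested non-strict lexicographic ordering `⪰⁽²⁾` on blocks. -/
def nlexGE {D : ℕ} {m : Fin D → ℕ} (a b : ∀ i, Fin (m i) → ℝ≥0∞) : Prop :=
  nlexGT a b ∨ ∀ i, lexGE (a i) (b i)

/-- The truncated nested strict lexicographic ordering `≻⁽²⁾_k`. -/
def nlexGTTrunc {D : ℕ} {m : Fin D → ℕ} (k : ℕ) (a b : ∀ i, Fin (m i) → ℝ≥0∞) : Prop :=
  ∃ l : Fin D, (l : ℕ) < k ∧ (∀ i < l, lexGE (a i) (b i)) ∧ lexGT (a l) (b l)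

/-- The truncated nested non-strict lexicographic ordering `⪰⁽²⁾_k`. -/
def nlexGETrunc {D : ℕ} {m : Fin D → ℕ} (k : ℕ) (a b : ∀ i, Fin (m i) → ℝ≥0∞) : Prop :=
  nlexGTTrunc k a b ∨ ∀ i : Fin D, (i : ℕ) < k → lexGE (a i) (b i)

/-- The next-time operator applied componentwise: `(𝕏 r)(s) = ∫ r dF(s)`. -/
noncomputable def nextTimeN (F : Kernel S S) {D : ℕ} {m : Fin D → ℕ}
    (r : S → ∀ i, Fin (m i) → ℝ≥0∞) : S → ∀ i, Fin (m i) → ℝ≥0∞ :=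
  fun s i k => ∫⁻ y, r y i k ∂(F s)

/-- A lexicographic progress-measure supermartingale (LexPMSM) for `(F, p)`
(priorities `1,…,D`, block `i` of the vector corresponding to priority `i+1`). -/
def IsLexPMSM (F : Kernel S S) (p : S → ℕ) {D : ℕ} {m : Fin D → ℕ}
    (r : S → ∀ i, Fin (m i) → ℝ≥0∞) : Prop :=
  (∀ i k, Measurable fun x => r x i k) ∧ (∀ x i k, r x i k ≠ ⊤) ∧
    (∀ x, Even (p x) → nlexGETrunc (p x) (r x) (nextTimeN F r x)) ∧
    (∀ x, ¬ Even (p x) → nlexGTTrunc (p x) (r x) (nextTimeN F r x))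

/-- A lexicographic generalised Streett supermartingale (LexGSSM), with blocks
viewed via flattening under the nested orderings `≻⁽²⁾` and `⪰⁽²⁾`:
`(𝕏 r)(x) ≺⁽²⁾ r(x)` on `A ∖ B` and `(𝕏 r)(x) ⪯⁽²⁾ r(x)` outside `A ∪ B`. -/
def IsLexGSSMBlocks (F : Kernel S S) (A B : Set S) {D : ℕ} {m : Fin D → ℕ}
    (r : S → ∀ i, Fin (m i) → ℝ≥0∞) : Prop :=
  (∀ i k, Measurable fun x => r x i k) ∧ (∀ x i k, r x i k ≠ ⊤) ∧
    (∀ x ∈ A \ B, nlexGT (r x) (nextTimeN F r x)) ∧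
    (∀ x ∉ A ∪ B, nlexGE (r x) (nextTimeN F r x))

/-- Truncation of a nested vector to its first `k` blocks. -/
def truncVec {D : ℕ} (m : Fin D → ℕ) (k : ℕ) (hk : k ≤ D)
    (v : ∀ j : Fin D, Fin (m j) → ℝ≥0∞) :
    ∀ j : Fin k, Fin (m (Fin.castLE hk j)) → ℝ≥0∞ :=
  fun j => v (Fin.castLE hk j)

/-- For a LexPMSM `r = (r₁,…,r_{2d})` for `(F, p)` with priorities in `{1,…,2d}`,
each truncation `(r₁,…,r_{2i−1})` is a LexGSSM for the Streett pair
`(S_{≤2i−1}, S_{≤2i−2})`, where `S_{≤k} = {x | p x ≤ k}`. -/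
theorem LexPMSM_truncation_is_LexGSSM
    (F : Kernel S S) [IsMarkovKernel F]
    (d : ℕ) (p : S → ℕ) (hpm : Measurable p) (hp : ∀ x, 1 ≤ p x ∧ p x ≤ 2 * d)
    (m : Fin (2 * d) → ℕ) (hm : ∀ i, 0 < m i)
    (r : S → ∀ i, Fin (m i) → ℝ≥0∞) (hr : IsLexPMSM F p r) :
    ∀ i : ℕ, 1 ≤ i → ∀ (hi : i ≤ d),
      IsLexGSSMBlocks F {x | p x ≤ 2 * i - 1} {x | p x ≤ 2 * i - 2}
        (fun x => truncVec m (2 * i - 1) (by omega) (r x)) := by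
  intro i h1 hi
  have hk : 2 * i - 1 ≤ 2 * d := by omega
  obtain ⟨hmeas, hfin, hev, hodd⟩ := hr
  -- restricting a strict decrease at an index below the truncation level
  have key : ∀ x (l : Fin (2 * d)), (l : ℕ) < 2 * i - 1 →
      (∀ j < l, lexGE (r x j) (nextTimeN F r x j)) →
      lexGT (r x l) (nextTimeN F r x l) →
      nlexGT (truncVec m (2 * i - 1) hk (r x))
        (nextTimeN F (fun x => truncVec m (2 * i - 1) hk (r x)) x) := by
    intro x l hl hlt hgt
    refine ⟨⟨l, hl⟩, ?_, hgt⟩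
    intro j hj
    exact hlt (Fin.castLE hk j) hj
  -- a strict decrease at or above the truncation level is a weak decrease below it
  have key2 : ∀ x, (∀ j : Fin (2 * d), (j : ℕ) < 2 * i - 1 →
        lexGE (r x j) (nextTimeN F r x j)) →
      nlexGE (truncVec m (2 * i - 1) hk (r x))
        (nextTimeN F (fun x => truncVec m (2 * i - 1) hk (r x)) x) := by
    intro x h
    exact Or.inr fun j => h (Fin.castLE hk j) j.2
  have key3 : ∀ x q, nlexGTTrunc q (r x) (nextTimeN F r x) →
      nlexGE (truncVec m (2 * i - 1) hk (r x))
        (nextTimeN F (fun x => truncVec m (2 * i - 1) hk (r x)) x) := by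
    rintro x q ⟨l, _, hlt, hgt⟩
    by_cases hl : (l : ℕ) < 2 * i - 1
    · exact Or.inl (key x l hl hlt hgt)
    · exact key2 x fun j hj => hlt j (Fin.lt_def.2 (by omega))
  refine ⟨fun j k => hmeas (Fin.castLE hk j) k, fun x j k => hfin x (Fin.castLE hk j) k, ?_, ?_⟩
  · rintro x ⟨hA, hB⟩
    simp only [mem_setOf_eq] at hA hB
    have hpx : p x = 2 * i - 1 := by omega
    have hne : ¬ Even (p x) := by
      rintro ⟨c, hc⟩
      omega
    obtain ⟨l, hl, hlt, hgt⟩ := hodd x hne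
    exact key x l (by omega) hlt hgt
  · intro x hx
    simp only [mem_union, mem_setOf_eq, not_or] at hx
    by_cases he : Even (p x)
    · rcases hev x he with h | h
      · exact key3 x _ h
      · exact key2 x fun j hj => h j (by omega)
    · exact key3 x _ (hodd x he)
end

section
/- Let F : S → G(S) be a Markov chain on a measurable space S and let p : S → {1,…,2d} be a measurable priority function. Suppose that for each i ∈ {1,…,d} there is a lexicographic generalised Streett supermartingale r_i : S → [0,∞)^{m_i} for the Streett pair (S_{≤2i−1}, S_{≤2i−2}), where S_{≤k} = {x ∈ S ∣ p(x) ≤ k}. Then r := (r₁,…,r_d) is a reduced lexicographic progress-measure supermartingale for (F, p): for each x ∈ S, r(x) ⪰⁽²⁾_{⌈p(x)/2⌉} (X r)(x) if p(x) is even, and r(x) ≻⁽²⁾_{⌈p(x)/2⌉} (X r)(x) if p(x) is odd. -/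
open MeasureTheory ProbabilityTheory Set
open scoped ENNReal NNReal

variable {S : Type*} [MeasurableSpace S]

/-- The next-time operator applied componentwise: `(𝕏 r)(s) = ∫ r dF(s)`. -/
noncomputable def nextTimeV (F : Kernel S S) {n : ℕ} (r : S → Fin n → ℝ≥0∞) :
    S → Fin n → ℝ≥0∞ :=
  fun s i => ∫⁻ y, r y i ∂(F s)

/-- A lexicographic generalised Streett supermartingale (LexGSSM) for `(F, A, B)`:
`(𝕏 r)(x) ≺ r(x)` on `A ∖ B` and `(𝕏 r)(x) ⪯ r(x)` outside `A ∪ B`. -/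
def IsLexGSSM (F : Kernel S S) (A B : Set S) {n : ℕ} (r : S → Fin n → ℝ≥0∞) : Prop :=
  (∀ i, Measurable fun x => r x i) ∧ (∀ x i, r x i ≠ ⊤) ∧
    (∀ x ∈ A \ B, lexGT (r x) (nextTimeV F r x)) ∧
    (∀ x ∉ A ∪ B, lexGE (r x) (nextTimeV F r x))

/-- If for each `i ∈ {1,…,d}` the `i`-th component `r_i : S → [0,∞)^{m_i}` of `r`
is a LexGSSM for the Streett pair `(S_{≤2i−1}, S_{≤2i−2})` (where
`S_{≤k} = {x | p x ≤ k}`), then `r = (r₁,…,r_d)` is a reduced lexicographic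
progress-measure supermartingale for `(F, p)`: for each `x`,
`r(x) ⪰⁽²⁾_{⌈p(x)/2⌉} (𝕏 r)(x)` if `p(x)` is even and
`r(x) ≻⁽²⁾_{⌈p(x)/2⌉} (𝕏 r)(x)` if `p(x)` is odd. -/
theorem LexGSSMs_give_reduced_LexPMSM
    (F : Kernel S S) [IsMarkovKernel F]
    (d : ℕ) (p : S → ℕ) (hpm : Measurable p) (hp : ∀ x, 1 ≤ p x ∧ p x ≤ 2 * d)
    (m : Fin d → ℕ) (hm : ∀ i, 0 < m i)
    (r : S → ∀ i : Fin d, Fin (m i) → ℝ≥0∞)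
    (hr : ∀ i : Fin d,
      IsLexGSSM F {x | p x ≤ 2 * (i : ℕ) + 1} {x | p x ≤ 2 * (i : ℕ)}
        (fun x => r x i)) :
    ∀ x : S,
      (Even (p x) → nlexGETrunc ((p x + 1) / 2) (r x) (nextTimeN F r x)) ∧
      (¬ Even (p x) → nlexGTTrunc ((p x + 1) / 2) (r x) (nextTimeN F r x)) := by
  intro x
  have hx := hp x
  have hge : ∀ i : Fin d, 2 * (i : ℕ) + 1 < p x → lexGE (r x i) (nextTimeN F r x i) := by
    intro i hi
    refine (hr i).2.2.2 x ?_
    simp only [Set.mem_union, Set.mem_setOf_eq]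
    omega
  refine ⟨fun he => Or.inr fun i hi => hge i ?_, fun ho => ?_⟩
  · obtain ⟨k, hk⟩ := he
    omega
  · obtain ⟨k, hk⟩ := Nat.not_even_iff_odd.mp ho
    refine ⟨⟨k, by omega⟩, ?_, fun i hi => hge i ?_, ?_⟩
    · show k < _
      omega
    · have : (i : ℕ) < k := hi
      omega
    · refine (hr ⟨k, by omega⟩).2.2.1 x ?_
      simp only [Set.mem_diff, Set.mem_setOf_eq]
      omega
end
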